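/- Let κ be an infinite cardinal with κ^ω = κ, let p be a selective ultrafilter on ω, and let ℱ be a finite subset of (ℤ^(κ))^ω such that {[f]_p : f ∈ ℱ} ∪ {[χ⃗_α]_p : α < κ} is a ℚ-linearly independent subset of Ult(ℚ,p). Then for every ε > 0 and every finite subset E of κ there exist A ∈ p and a family (δ_n : n ∈ A) of positive real numbers such that: whenever (U_f : f ∈ ℱ) is a family of arcs of 𝕋 of length ε and ϱ is an arc function of length at least ε with supp ϱ ⊆ E, then for each n ∈ A there exists a δ_n-arc function ψ_n ≤ ϱ such that supp ψ_n = ⋃_{f ∈ ℱ} supp f(n) ∪ E and Σ_{μ ∈ supp f(n)} f(n)(μ)·ψ_n(μ) ⊆ U_f for each f ∈ ℱ. -/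

import Mathlib

open Cardinal Filter Set Pointwise

noncomputable section

/-- A free (nonprincipal) ultrafilter on ω. -/
def IsFreeUltrafilter (p : Ultrafilter ℕ) : Prop := ∀ n : ℕ, p ≠ pure n

/-- A selective ultrafilter on ω. -/
def IsSelective (p : Ultrafilter ℕ) : Prop :=
  IsFreeUltrafilter p ∧
  ∀ A : ℕ → Set ℕ,
    (∀ k, (A k).Nonempty) → (Pairwise fun k l => Disjoint (A k) (A l)) →
    (⋃ k, A k) = Set.univ →
    (∃ k, A k ∈ p) ∨ ∃ B ∈ p, ∀ k, ∃! n, n ∈ B ∩ A k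

/-- Rudin–Keisler order: `U ≤ V` iff `V = f_*(U)` for some `f`. -/
def RKle (U V : Ultrafilter ℕ) : Prop := ∃ f : ℕ → ℕ, Ultrafilter.map f U = V

/-- Rudin–Keisler incomparability. -/
def RKIncomp (U V : Ultrafilter ℕ) : Prop := ¬ RKle U V ∧ ¬ RKle V U

/-- The index set of order type (the initial ordinal of) `κ`. -/
abbrev Idx (κ : Cardinal) : Type _ := ↥(Set.Iio κ.ord)

/-- The free abelian group `ℤ^(κ)` of finitely supported integer functions on `κ`. -/
abbrev GZ (κ : Cardinal) := Idx κ →₀ ℤ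

/-- The ℚ-vector space `ℚ^(κ)` of finitely supported rational functions on `κ`. -/
abbrev GQ (κ : Cardinal) := Idx κ →₀ ℚ

/-- The canonical embedding `ℤ^(κ) → ℚ^(κ)`. -/
def toQ (κ : Cardinal) (f : GZ κ) : GQ κ :=
  Finsupp.mapRange (Int.cast : ℤ → ℚ) Int.cast_zero f

/-- The characteristic function `χ_ξ`. -/
def chi (κ : Cardinal) (ξ : Idx κ) : GZ κ := Finsupp.single ξ 1

/-- The class `[f]_p` of a sequence `f : ω → ℤ^(κ)` in the ultrapower
`Ult(ℚ, p) = (ℚ^(κ))^ω / p`, realized as a germ. -/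
def cls (κ : Cardinal) (p : Ultrafilter ℕ) (f : ℕ → GZ κ) :
    Filter.Germ (↑p : Filter ℕ) (GQ κ) :=
  (↑(fun n => toQ κ (f n)) : Filter.Germ (↑p : Filter ℕ) (GQ κ))

/-- The class `[χ⃗_ξ]_p` of the constant sequence with value `χ_ξ`. -/
def clsChi (κ : Cardinal) (p : Ultrafilter ℕ) (ξ : Idx κ) :
    Filter.Germ (↑p : Filter ℕ) (GQ κ) :=
  cls κ p (fun _ => chi κ ξ)

/-- `cls` as an additive homomorphism. -/
def clsHom (κ : Cardinal) (p : Ultrafilter ℕ) :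
    (ℕ → GZ κ) →+ Filter.Germ (↑p : Filter ℕ) (GQ κ) :=
  AddMonoidHom.mk' (cls κ p) (by
    intro a b
    unfold cls
    have h : (fun n => toQ κ ((a + b) n)) =
        (fun n => toQ κ (a n)) + (fun n => toQ κ (b n)) := by
      funext n
      simp only [Pi.add_apply, toQ]
      exact Finsupp.mapRange_add (fun x y => by push_cast; ring) _ _
    rw [h, ← Filter.Germ.coe_add])

/-- `Ult(ℤ, p)`: the subgroup of `Ult(ℚ, p)` consisting of classes of
integer-valued sequences. -/
def UltZ (κ : Cardinal) (p : Ultrafilter ℕ) :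
    AddSubgroup (Filter.Germ (↑p : Filter ℕ) (GQ κ)) :=
  (clsHom κ p).range

/-- `ℱ` is linearly independent mod `A*`. -/
def LinIndepMod (κ : Cardinal) (A : Set ℕ) (F : Set (ℕ → GZ κ)) : Prop :=
  ∀ p : Ultrafilter ℕ, IsFreeUltrafilter p → A ∈ p →
    (∀ f ∈ F, ∀ g ∈ F, f ≠ g → cls κ p f ≠ cls κ p g) ∧
    LinearIndependent ℚ
      (Sum.elim (fun f : F => cls κ p ↑f) (fun ξ : Idx κ => clsChi κ p ξ))

/-- `ℰ` is maximal (w.r.t. inclusion) among subsets linearly independent mod `A*`. -/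
def MaximalLinIndepMod (κ : Cardinal) (A : Set ℕ) (E : Set (ℕ → GZ κ)) : Prop :=
  LinIndepMod κ A E ∧ ∀ E' : Set (ℕ → GZ κ), LinIndepMod κ A E' → E ⊆ E' → E' = E

/-- A finite tower in ω: a finite decreasing sequence of infinite subsets of ω. -/
def IsTower (T : List (Set ℕ)) : Prop :=
  (∀ A ∈ T, A.Infinite) ∧
  ∀ i : ℕ, ∀ h : i + 1 < T.length, T.get ⟨i + 1, h⟩ ⊆ T.get ⟨i, Nat.lt_of_succ_lt h⟩

/-- `l(T)`: the last term of a finite tower, with `l(∅) = ω`. -/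
def lastOf (T : List (Set ℕ)) : Set ℕ := T.getLastD Set.univ

/-- `x` is a `p`-limit of the sequence `s`. -/
def IsPLim {X : Type*} [TopologicalSpace X] (p : Ultrafilter ℕ) (s : ℕ → X) (x : X) : Prop :=
  ∀ U ∈ nhds x, {n | s n ∈ U} ∈ p

/-- Countable compactness: every countable open cover has a finite subcover. -/
def CountablyCompactSp (X : Type*) [TopologicalSpace X] : Prop :=
  ∀ 𝒰 : Set (Set X), 𝒰.Countable → (∀ u ∈ 𝒰, IsOpen u) → ⋃₀ 𝒰 = Set.univ →
    ∃ ℱ ⊆ 𝒰, ℱ.Finite ∧ ⋃₀ ℱ = Set.univ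


/-- The circle group 𝕋 = ℝ/ℤ. -/
abbrev Circle1 := AddCircle (1 : ℝ)

/-- The arc of 𝕋 determined by the interval `(a, a + l)`. -/
def arcOf (a l : ℝ) : Set Circle1 := (fun x : ℝ => (x : Circle1)) '' Set.Ioo a (a + l)

/-- The support of an arc function: coordinates where it is not all of 𝕋. -/
def arcSupp (κ : Cardinal) (ψ : Idx κ → Set Circle1) : Set (Idx κ) :=
  {α | ψ α ≠ Set.univ}

/-- An `ε`-arc function: finitely supported, and on its support each value is an
arc of length exactly `ε`. -/
def IsEpsArcFn (κ : Cardinal) (ε : ℝ) (ψ : Idx κ → Set Circle1) : Prop :=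
  (arcSupp κ ψ).Finite ∧ ∀ α, ψ α = Set.univ ∨ ∃ a : ℝ, ψ α = arcOf a ε

/-- An arc function of length at least `ε`. -/
def IsArcFnGe (κ : Cardinal) (ε : ℝ) (ψ : Idx κ → Set Circle1) : Prop :=
  (arcSupp κ ψ).Finite ∧ ∀ α, ψ α = Set.univ ∨ ∃ a l : ℝ, ε ≤ l ∧ ψ α = arcOf a l

/-- `ψ ≤ ϱ` for arc functions: coordinatewise, either the closure of `ψ α` is
contained in `ϱ α`, or `ψ α = ϱ α`. -/
def ArcFnLE (κ : Cardinal) (ψ ϱ : Idx κ → Set Circle1) : Prop :=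
  ∀ α, closure (ψ α) ⊆ ϱ α ∨ ψ α = ϱ α

/-!
Arcs are balls, so the points `X μ` serving as centres of the arcs `ψ_n(μ)` must solve the
inequalities `‖∑ μ, f(n)(μ) • X μ - centre of U_f‖ < ε / 4` and `‖X α - centre of ϱ(α)‖ < ε / 4`;
`δ_n` is then chosen small in terms of the coefficients of the finitely many `f(n)`.

Solvability is a quantitative Kronecker theorem. By Stone–Weierstrass there is a trigonometric
polynomial `P` on `𝕋^I` whose mean exceeds its supremum outside a small ball around `0`. If the
characters `h_i` of a compact group satisfy none of the finitely many nontrivial relations that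
occur as frequencies of `P`, then `P(h - t)` has the same mean as `P`, so `h` comes close to `t`.
Linear independence in the ultrapower says that, for `p`-almost all `n`, the `f(n)` together with
the `χ_α` satisfy none of these relations.
-/

section Kronecker

open MeasureTheory UnitAddTorus

theorem integral_toCircle_eq_zero {Y : Type*} [AddGroup Y] [MeasurableSpace Y] [MeasurableAdd Y]
    (μ : Measure Y) [μ.IsAddLeftInvariant] {χ : Y →+ UnitAddCircle} (hχ : χ ≠ 0) :
    ∫ y, (AddCircle.toCircle (χ y) : ℂ) ∂μ = 0 := by
  obtain ⟨y₀, hy₀⟩ := DFunLike.ne_iff.1 hχ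
  have toCircle_ne_one : (AddCircle.toCircle (χ y₀) : ℂ) ≠ 1 := by
    rw [Ne, Circle.coe_eq_one, ← AddCircle.toCircle_zero]
    exact (AddCircle.injective_toCircle one_ne_zero).ne hy₀
  have translate := integral_add_left_eq_self (μ := μ)
    (fun y => (AddCircle.toCircle (χ y) : ℂ)) y₀
  simp only [map_add, AddCircle.toCircle_add, Circle.coe_mul, integral_const_mul] at translate
  exact (mul_left_eq_self₀.1 translate).resolve_left toCircle_ne_one

variable {I : Type*} [Fintype I]

theorem mFourier_eq_toCircle_sum (c : I → ℤ) (x : UnitAddTorus I) :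
    mFourier c x = AddCircle.toCircle (∑ i, c i • x i) := by
  classical
  have toCircle_sum (s : Finset I) :
      (AddCircle.toCircle (∑ i ∈ s, c i • x i) : ℂ) = ∏ i ∈ s, fourier (c i) (x i) := by
    induction s using Finset.induction_on with
    | empty => simp
    | insert i s hi ih =>
      rw [Finset.sum_insert hi, Finset.prod_insert hi, AddCircle.toCircle_add, Circle.coe_mul, ih,
        fourier_apply]
  exact (toCircle_sum Finset.univ).symm

theorem integral_mFourier_comp_eq_zero {Y : Type*} [AddGroup Y] [MeasurableSpace Y]
    [MeasurableAdd Y] (μ : Measure Y) [μ.IsAddLeftInvariant] (h : I → Y →+ UnitAddCircle)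
    {c : I → ℤ} (hc : ∑ i, c i • h i ≠ 0) (t : UnitAddTorus I) :
    ∫ y, mFourier c (fun i => h i y - t i) ∂μ = 0 := by
  have factor (y : Y) : mFourier c (fun i => h i y - t i) =
      AddCircle.toCircle ((∑ i, c i • h i) y) * mFourier c (-t) := by
    simp only [mFourier_eq_toCircle_sum, ← Circle.coe_mul, ← AddCircle.toCircle_add,
      AddMonoidHom.finsetSum_apply, AddMonoidHom.smul_apply, ← Finset.sum_add_distrib, ← smul_add,
      Pi.neg_apply, sub_eq_add_neg]
  simp only [factor, integral_mul_const, integral_toCircle_eq_zero μ hc, zero_mul]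

/-- The trigonometric polynomial on the torus `𝕋^I` with coefficients `a`. -/
def trigPoly (a : (I → ℤ) →₀ ℂ) : C(UnitAddTorus I, ℂ) :=
  Finsupp.linearCombination ℂ mFourier a

theorem integral_trigPoly_comp {Y : Type*} [AddGroup Y] [TopologicalSpace Y] [CompactSpace Y]
    [ContinuousAdd Y] [MeasurableSpace Y] [BorelSpace Y] (μ : Measure Y) [IsProbabilityMeasure μ]
    [μ.IsAddLeftInvariant] {h : I → Y →+ UnitAddCircle} (continuous_h : ∀ i, Continuous (h i))
    {a : (I → ℤ) →₀ ℂ} (ha : ∀ c ∈ a.support, c ≠ 0 → ∑ i, c i • h i ≠ 0) (t : UnitAddTorus I) :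
    ∫ y, trigPoly a (fun i => h i y - t i) ∂μ = a 0 := by
  have expand (y : Y) : trigPoly a (fun i => h i y - t i) =
      ∑ c ∈ a.support, a c * mFourier c (fun i => h i y - t i) := by
    simp [trigPoly, Finsupp.linearCombination_apply, Finsupp.sum]
  have integrable_term (c : I → ℤ) :
      Integrable (fun y => a c * mFourier c (fun i => h i y - t i)) μ :=
    Continuous.integrable_of_hasCompactSupport (by fun_prop) (.of_compactSpace _)
  simp only [expand]
  rw [integral_finsetSum _ fun c _ => integrable_term c]
  simp only [integral_const_mul]
  rw [Finset.sum_eq_single 0]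
  · simp [mFourier_zero]
  · intro c hc hc0
    rw [integral_mFourier_comp_eq_zero μ h (ha c hc hc0), mul_zero]
  · intro h0
    rw [Finsupp.notMem_support_iff.1 h0, zero_mul]

theorem exists_isProbabilityMeasure_isAddHaarMeasure (Y : Type*) [AddGroup Y] [TopologicalSpace Y]
    [IsTopologicalAddGroup Y] [CompactSpace Y] [MeasurableSpace Y] [BorelSpace Y] :
    ∃ μ : Measure Y, IsProbabilityMeasure μ ∧ μ.IsAddHaarMeasure :=
  ⟨Measure.addHaarMeasure ⊤, ⟨Measure.addHaarMeasure_self⟩, inferInstance⟩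

theorem exists_zsmul_ne_zero {k : ℤ} (hk : k ≠ 0) : ∃ x : UnitAddCircle, k • x ≠ 0 := by
  have norm_half := AddCircle.norm_half_period_eq (1 : ℝ)
  refine ⟨DivisibleBy.div ((1 / 2 : ℝ) : UnitAddCircle) k, fun h => ?_⟩
  rw [DivisibleBy.div_cancel _ hk] at h
  norm_num [h] at norm_half

theorem integral_trigPoly (μ : Measure (UnitAddTorus I)) [IsProbabilityMeasure μ]
    [μ.IsAddLeftInvariant] (a : (I → ℤ) →₀ ℂ) : ∫ x, trigPoly a x ∂μ = a 0 := by
  classical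
  have no_relation (c : I → ℤ) (hc : c ≠ 0) :
      ∑ i, c i • Pi.evalAddMonoidHom (fun _ : I => UnitAddCircle) i ≠ 0 := by
    obtain ⟨i, hi⟩ := Function.ne_iff.1 hc
    obtain ⟨x, hx⟩ := exists_zsmul_ne_zero hi
    intro relation
    apply hx
    simpa [AddMonoidHom.finsetSum_apply, Pi.single_apply] using
      DFunLike.congr_fun relation (Pi.single i x)
  simpa using integral_trigPoly_comp μ (fun i => continuous_apply i)
    (fun c _ => no_relation c) (0 : UnitAddTorus I)

theorem exists_norm_trigPoly_sub_lt (f : C(UnitAddTorus I, ℂ)) {r : ℝ} (hr : 0 < r) :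
    ∃ a : (I → ℤ) →₀ ℂ, ‖trigPoly a - f‖ < r := by
  have hf : f ∈ closure
      (Submodule.span ℂ (range (mFourier (d := I))) : Set C(UnitAddTorus I, ℂ)) := by
    rw [← Submodule.topologicalClosure_coe, span_mFourier_closure_eq_top]
    trivial
  obtain ⟨P, hP, hPf⟩ := Metric.mem_closure_iff.1 hf r hr
  obtain ⟨a, rfl⟩ := (Finsupp.mem_span_range_iff_exists_finsupp).1 hP
  exact ⟨a, by rwa [dist_comm, dist_eq_norm] at hPf⟩

theorem exists_trigPoly_peak {η : ℝ} (hη : 0 < η) :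
    ∃ a : (I → ℤ) →₀ ℂ, ∃ r < ‖a 0‖, ∀ x, η ≤ ‖x‖ → ‖trigPoly a x‖ ≤ r := by
  obtain ⟨μ, _, _⟩ := exists_isProbabilityMeasure_isAddHaarMeasure (UnitAddTorus I)
  let bump : C(UnitAddTorus I, ℝ) := ⟨fun x => max 0 (η - ‖x‖), by fun_prop⟩
  let f : C(UnitAddTorus I, ℂ) := ⟨fun x => bump x, by fun_prop⟩
  have integral_pos : 0 < ∫ x, bump x ∂μ := by
    refine bump.continuous.integral_pos_of_hasCompactSupport_nonneg_nonzero
      (.of_compactSpace _) (fun x => le_max_left _ _) (x := 0) ?_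
    simp [bump, hη]
  have integral_f : ∫ x, f x ∂μ = ((∫ x, bump x ∂μ : ℝ) : ℂ) := integral_ofReal
  set r := (∫ x, bump x ∂μ) / 3 with hr
  obtain ⟨a, ha⟩ := exists_norm_trigPoly_sub_lt f (r := r) (by positivity)
  have dist_le (x : UnitAddTorus I) : ‖trigPoly a x - f x‖ ≤ r :=
    ((trigPoly a - f).norm_coe_le_norm x).trans ha.le
  have integrable (g : C(UnitAddTorus I, ℂ)) : Integrable g μ :=
    g.continuous.integrable_of_hasCompactSupport (.of_compactSpace _)
  have mean_close : ‖a 0 - ∫ x, f x ∂μ‖ ≤ r := by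
    rw [← integral_trigPoly μ a, ← integral_sub (integrable _) (integrable _)]
    simpa using norm_integral_le_of_norm_le_const (μ := μ) (.of_forall dist_le)
  refine ⟨a, r, ?_, fun x hx => ?_⟩
  · have norm_integral_f : ‖∫ x, f x ∂μ‖ = 3 * r := by
      rw [integral_f, Complex.norm_of_nonneg integral_pos.le, hr]
      ring
    have := norm_sub_norm_le (∫ x, f x ∂μ) (a 0)
    rw [norm_sub_rev] at this
    linarith
  · have f_eq_zero : f x = 0 := by simp [f, bump, hx]
    simpa [f_eq_zero] using dist_le x

theorem exists_finset_forall_exists_norm_sub_lt.{u} (I : Type*) [Fintype I]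
    {η : ℝ} (hη : 0 < η) :
    ∃ R : Finset (I → ℤ), 0 ∉ R ∧
      ∀ (Y : Type u) [AddGroup Y] [TopologicalSpace Y] [IsTopologicalAddGroup Y] [CompactSpace Y]
        (h : I → Y →+ UnitAddCircle), (∀ i, Continuous (h i)) →
        (∀ c ∈ R, ∑ i, c i • h i ≠ 0) →
        ∀ t : I → UnitAddCircle, ∃ y, ∀ i, ‖h i y - t i‖ < η := by
  classical
  obtain ⟨a, r, mean_gt, peak⟩ := exists_trigPoly_peak (I := I) hη
  refine ⟨a.support.erase 0, Finset.notMem_erase _ _,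
    fun Y _ _ _ _ h continuous_h no_relation t => ?_⟩
  borelize Y
  obtain ⟨μ, _, _⟩ := exists_isProbabilityMeasure_isAddHaarMeasure Y
  by_contra! far
  have norm_le (y : Y) : ‖trigPoly a (fun i => h i y - t i)‖ ≤ r := by
    refine peak _ ?_
    obtain ⟨i, hi⟩ := far y
    exact hi.trans (norm_le_pi_norm (fun i => h i y - t i) i)
  have mean_eq := integral_trigPoly_comp μ continuous_h
    (fun c hc hc0 => no_relation c (Finset.mem_erase.2 ⟨hc0, hc⟩)) t
  have mean_le := norm_integral_le_of_norm_le_const (μ := μ) (.of_forall norm_le)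
  rw [mean_eq, probReal_univ, mul_one] at mean_le
  exact mean_gt.not_ge mean_le

/-- The character `X ↦ ∑ μ, v μ • X μ` of the torus `𝕋^ι` given by `v ∈ ℤ^(ι)`. -/
def torusChar (ι : Type*) : (ι →₀ ℤ) →+ ((ι → UnitAddCircle) →+ UnitAddCircle) :=
  Finsupp.liftAddHom fun μ => zmultiplesHom _ (Pi.evalAddMonoidHom _ μ)

theorem torusChar_apply {ι : Type*} (v : ι →₀ ℤ) (X : ι → UnitAddCircle) :
    torusChar ι v X = ∑ μ ∈ v.support, v μ • X μ := by
  simp [torusChar, Finsupp.sum, AddMonoidHom.finsetSum_apply]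

theorem torusChar_injective (ι : Type*) : Function.Injective (torusChar ι) := by
  classical
  refine (injective_iff_map_eq_zero _).2 fun v hv => Finsupp.ext fun μ => ?_
  by_contra (hμ : v μ ≠ 0)
  obtain ⟨x, hx⟩ := exists_zsmul_ne_zero hμ
  apply hx
  simpa [torusChar_apply, Pi.single_apply, hμ] using DFunLike.congr_fun hv (Pi.single μ x)

theorem continuous_torusChar {ι : Type*} (v : ι →₀ ℤ) : Continuous (torusChar ι v) := by
  simp only [funext (torusChar_apply v)]
  fun_prop

theorem exists_finset_forall_exists_norm_torusChar_sub_lt.{u} (I : Type*) [Fintype I]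
    {η : ℝ} (hη : 0 < η) :
    ∃ R : Finset (I → ℤ), 0 ∉ R ∧
      ∀ (ι : Type u) (v : I → ι →₀ ℤ), (∀ c ∈ R, ∑ i, c i • v i ≠ 0) →
        ∀ t : I → UnitAddCircle, ∃ X : ι → UnitAddCircle, ∀ i, ‖torusChar ι (v i) X - t i‖ < η := by
  obtain ⟨R, zero_notMem, kronecker⟩ := exists_finset_forall_exists_norm_sub_lt I hη
  refine ⟨R, zero_notMem, fun ι v no_relation t =>
    kronecker (ι → UnitAddCircle) (fun i => torusChar ι (v i)) (fun i => continuous_torusChar (v i))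
      (fun c hc relation => no_relation c hc (torusChar_injective ι ?_)) t⟩
  simpa using relation

theorem eventually_sum_zsmul_ne_zero {α V I : Type*} [Fintype I] [AddCommGroup V] [Module ℚ V]
    {p : Ultrafilter α} {u : I → α → V}
    (hu : LinearIndependent ℚ fun i => (u i : Germ (p : Filter α) V))
    {c : I → ℤ} (hc : c ≠ 0) : ∀ᶠ n in (p : Filter α), ∑ i, c i • u i n ≠ 0 := by
  refine p.eventually_not.2 fun relation => hc ?_
  have germ_relation : ∑ i, (c i : ℚ) • (u i : Germ (p : Filter α) V) = 0 := by
    calc ∑ i, (c i : ℚ) • (u i : Germ (p : Filter α) V)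
        = Germ.coeAddHom _ (∑ i, c i • u i) := by simp [Int.cast_smul_eq_zsmul]
      _ = 0 := Germ.coe_eq.2 (relation.mono fun n hn => by simpa using hn)
  have := Fintype.linearIndependent_iff.1 hu _ germ_relation
  exact funext fun i => by exact_mod_cast this i

end Kronecker

section Arcs

theorem arcOf_eq_ball (a l : ℝ) : arcOf a l = Metric.ball ((a + l / 2 : ℝ) : Circle1) (l / 2) := by
  ext u
  constructor
  · rintro ⟨x, ⟨hax, hxl⟩, rfl⟩
    rw [Metric.mem_ball, dist_eq_norm, ← AddCircle.coe_sub]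
    refine (QuotientAddGroup.norm_mk_le_norm).trans_lt ?_
    rw [Real.norm_eq_abs, abs_lt]
    constructor <;> linarith
  · induction u using QuotientAddGroup.induction_on with | H x =>
    intro hx
    rw [Metric.mem_ball, dist_eq_norm, ← AddCircle.coe_sub, UnitAddCircle.norm_eq, abs_lt] at hx
    refine ⟨x - round (x - (a + l / 2)), ⟨by linarith, by linarith⟩, ?_⟩
    simp

theorem ball_ne_univ (x : Circle1) {r : ℝ} (hr : r ≤ 1 / 2) : Metric.ball x r ≠ Set.univ := by
  refine (ne_univ_iff_exists_notMem _).2 ⟨x + ((1 / 2 : ℝ) : Circle1), ?_⟩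
  have := AddCircle.norm_half_period_eq (1 : ℝ)
  simp only [Metric.mem_ball, dist_self_add_left, this, abs_one, not_lt, hr]

theorem zsmul_subset_closedBall {G : Type*} [SeminormedAddCommGroup G] {s : Set G} {x : G} {r : ℝ}
    (hs : s ⊆ Metric.closedBall x r) (k : ℤ) :
    k • s ⊆ Metric.closedBall (k • x) (|(k : ℝ)| * r) := by
  have nsmul_subset (m : ℕ) : m • s ⊆ Metric.closedBall (m • x) (m * r) := by
    induction m with
    | zero => simp
    | succ m ih =>
      calc (m + 1) • s = m • s + s := succ_nsmul s m
        _ ⊆ Metric.closedBall (m • x) (m * r) + Metric.closedBall x r := Set.add_subset_add ih hs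
        _ ⊆ Metric.closedBall ((m + 1) • x) ((m + 1 : ℕ) * r) := by
          rintro _ ⟨y, hy, z, hz, rfl⟩
          rw [succ_nsmul, Nat.cast_succ, add_one_mul]
          exact (dist_add_add_le y z _ _).trans (add_le_add hy hz)
  obtain ⟨m, rfl | rfl⟩ := k.eq_nat_or_neg
  · simpa using nsmul_subset m
  · simpa using Set.neg_subset_neg.2 (nsmul_subset m)

theorem sum_zsmul_subset_closedBall {ι G : Type*} [SeminormedAddCommGroup G] {s : Finset ι}
    (k : ι → ℤ) {B : ι → Set G} {x : ι → G} {r : ℝ}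
    (hB : ∀ i ∈ s, B i ⊆ Metric.closedBall (x i) r) :
    ∑ i ∈ s, k i • B i ⊆
      Metric.closedBall (∑ i ∈ s, k i • x i) ((∑ i ∈ s, |(k i : ℝ)|) * r) := by
  intro u hu
  obtain ⟨g, hg, rfl⟩ := (Set.mem_finsetSum _ _ _).1 hu
  rw [Metric.mem_closedBall, Finset.sum_mul]
  exact dist_sum_sum_le_of_le s fun i hi => zsmul_subset_closedBall (hB i hi) (k i) (hg hi)

theorem exists_pos_forall_mul_lt {β : Type*} (s : Finset β) (L : β → ℝ) {ε : ℝ} (hε : 0 < ε) :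
    ∃ δ, 0 < δ ∧ δ ≤ 1 ∧ δ < ε ∧ ∀ i ∈ s, L i * δ < ε := by
  have eventually_mul_lt (c : ℝ) : ∀ᶠ δ in nhdsWithin 0 (Set.Ioi 0), c * δ < ε := by
    refine (ContinuousAt.eventually_lt (by fun_prop) (by fun_prop) ?_).filter_mono
      nhdsWithin_le_nhds
    simpa using hε
  have eventually_le_one : ∀ᶠ δ : ℝ in nhdsWithin 0 (Set.Ioi 0), δ ≤ 1 :=
    (eventually_le_nhds one_pos).filter_mono nhdsWithin_le_nhds
  have eventually_forall_mul_lt := (eventually_all_finset s).2 fun i _ => eventually_mul_lt (L i)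
  obtain ⟨δ, pos, le_one, lt, mul_lt⟩ := (eventually_mem_nhdsWithin.and (eventually_le_one.and
    ((eventually_mul_lt 1).and eventually_forall_mul_lt))).exists
  exact ⟨δ, pos, le_one, by simpa using lt, mul_lt⟩

variable {κ : Cardinal}

/-- The arc function with support `S` whose value at `α ∈ S` is the arc of length `δ` centred at
`X α`. -/
def ballArcFn (S : Set (Idx κ)) (X : Idx κ → Circle1) (δ : ℝ) : Idx κ → Set Circle1 :=
  open Classical in fun α => if α ∈ S then Metric.ball (X α) (δ / 2) else Set.univ

variable {S : Set (Idx κ)} {X : Idx κ → Circle1} {δ : ℝ} {α : Idx κ}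

theorem ballArcFn_of_mem (hα : α ∈ S) : ballArcFn S X δ α = Metric.ball (X α) (δ / 2) :=
  if_pos hα

theorem ballArcFn_of_notMem (hα : α ∉ S) : ballArcFn S X δ α = Set.univ :=
  if_neg hα

theorem arcSupp_ballArcFn_subset : arcSupp κ (ballArcFn S X δ) ⊆ S :=
  fun _ hα => by_contra fun h => hα (ballArcFn_of_notMem h)

theorem arcSupp_ballArcFn (hδ : δ ≤ 1) : arcSupp κ (ballArcFn S X δ) = S := by
  refine arcSupp_ballArcFn_subset.antisymm fun α hα => ?_
  rw [arcSupp, Set.mem_ofPred_eq, ballArcFn_of_mem hα]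
  exact ball_ne_univ _ (by linarith)

theorem isEpsArcFn_ballArcFn (hS : S.Finite) : IsEpsArcFn κ δ (ballArcFn S X δ) := by
  refine ⟨hS.subset arcSupp_ballArcFn_subset, fun α => ?_⟩
  by_cases hα : α ∈ S
  · obtain ⟨x, hx⟩ := QuotientAddGroup.mk_surjective (X α)
    refine .inr ⟨x - δ / 2, ?_⟩
    rw [ballArcFn_of_mem hα, arcOf_eq_ball, sub_add_cancel, ← hx]
  · exact .inl (ballArcFn_of_notMem hα)

theorem arcFnLE_ballArcFn {ϱ : Idx κ → Set Circle1}
    (hϱ : ∀ α ∈ arcSupp κ ϱ, α ∈ S ∧ Metric.closedBall (X α) (δ / 2) ⊆ ϱ α) :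
    ArcFnLE κ (ballArcFn S X δ) ϱ := by
  refine fun α => .inl ?_
  by_cases hα : ϱ α = Set.univ
  · exact hα ▸ Set.subset_univ _
  · rw [ballArcFn_of_mem (hϱ α hα).1]
    exact Metric.closure_ball_subset_closedBall.trans (hϱ α hα).2

theorem sum_zsmul_ballArcFn_subset {f : GZ κ} (hf : (f.support : Set (Idx κ)) ⊆ S) :
    ∑ μ ∈ f.support, f μ • ballArcFn S X δ μ ⊆
      Metric.closedBall (torusChar _ f X) ((∑ μ ∈ f.support, |(f μ : ℝ)|) * (δ / 2)) := by
  rw [torusChar_apply]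
  refine sum_zsmul_subset_closedBall f fun μ hμ => ?_
  rw [ballArcFn_of_mem (hf hμ)]
  exact Metric.ball_subset_closedBall

theorem IsArcFnGe.exists_ball_subset {ε : ℝ} {ϱ : Idx κ → Set Circle1} (hϱ : IsArcFnGe κ ε ϱ) :
    ∃ t : Idx κ → Circle1, ∀ α, Metric.ball (t α) (ε / 2) ⊆ ϱ α := by
  have exists_center (α : Idx κ) : ∃ x, Metric.ball x (ε / 2) ⊆ ϱ α := by
    obtain h | ⟨a, l, hl, h⟩ := hϱ.2 α
    · exact ⟨0, h ▸ Set.subset_univ _⟩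
    · rw [h, arcOf_eq_ball]
      exact ⟨_, Metric.ball_subset_ball (by linarith)⟩
  exact Classical.skolem.1 exists_center

end Arcs

section Relations

variable {κ : Cardinal}

theorem eventually_sum_zsmul_ne_zero_of_cls {I : Type*} [Fintype I] (p : Ultrafilter ℕ)
    {v : I → ℕ → GZ κ} (hv : LinearIndependent ℚ fun i => cls κ p (v i)) {c : I → ℤ}
    (hc : c ≠ 0) : ∀ᶠ n in (p : Filter ℕ), ∑ i, c i • v i n ≠ 0 := by
  let toQHom : GZ κ →+ GQ κ := Finsupp.mapRange.addMonoidHom (Int.castAddHom ℚ)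
  refine (eventually_sum_zsmul_ne_zero (u := fun i n => toQHom (v i n)) hv hc).mono
    fun n hn relation => hn ?_
  simpa using congrArg toQHom relation

theorem eventually_sum_zsmul_elim_chi_ne_zero (p : Ultrafilter ℕ) {F : Finset (ℕ → GZ κ)}
    (hli : LinearIndependent ℚ
      (Sum.elim (fun f : ↥F => cls κ p ↑f) (fun α : Idx κ => clsChi κ p α)))
    {E : Finset (Idx κ)} {c : ↥F ⊕ ↥E → ℤ} (hc : c ≠ 0) :
    ∀ᶠ n in (p : Filter ℕ),
      ∑ i, c i • (Sum.elim (fun f : ↥F => f.1 n) (fun α : ↥E => chi κ α) i : GZ κ) ≠ 0 := by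
  let v : ↥F ⊕ ↥E → ℕ → GZ κ := Sum.elim Subtype.val fun α _ => chi κ α
  have independent : LinearIndependent ℚ fun i => cls κ p (v i) := by
    convert hli.comp (Sum.map id Subtype.val)
      (Sum.map_injective.2 ⟨Function.injective_id, Subtype.val_injective⟩) using 2 with i
    cases i <;> rfl
  simpa [v, Fintype.sum_sum_type] using eventually_sum_zsmul_ne_zero_of_cls p independent hc

end Relations

theorem statement16_general (κ : Cardinal) (p : Ultrafilter ℕ) (F : Finset (ℕ → GZ κ))
    (hli : LinearIndependent ℚ
      (Sum.elim (fun f : ↥F => cls κ p ↑f) (fun α : Idx κ => clsChi κ p α)))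
    (ε : ℝ) (hε : 0 < ε) (E : Finset (Idx κ)) :
    ∃ A ∈ p, ∃ δ : ℕ → ℝ, (∀ n ∈ A, 0 < δ n) ∧
      ∀ U : (ℕ → GZ κ) → Set Circle1, (∀ f ∈ F, ∃ a : ℝ, U f = arcOf a ε) →
      ∀ ϱ : Idx κ → Set Circle1, IsArcFnGe κ ε ϱ → arcSupp κ ϱ ⊆ ↑E →
      ∀ n ∈ A, ∃ ψ : Idx κ → Set Circle1,
        IsEpsArcFn κ (δ n) ψ ∧ ArcFnLE κ ψ ϱ ∧
        arcSupp κ ψ = (⋃ f ∈ F, ↑(f n).support) ∪ ↑E ∧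
        ∀ f ∈ F, (∑ μ ∈ (f n).support, (f n) μ • ψ μ) ⊆ U f := by
  obtain ⟨R, zero_notMem, kronecker⟩ :=
    exists_finset_forall_exists_norm_torusChar_sub_lt (↥F ⊕ ↥E) (η := ε / 4) (by positivity)
  have no_relation := (eventually_all_finset R).2 fun c hc =>
    eventually_sum_zsmul_elim_chi_ne_zero p hli (ne_of_mem_of_not_mem hc zero_notMem)
  choose δ δ_pos δ_le_one δ_lt mul_δ_lt using fun n => exists_pos_forall_mul_lt F
    (fun f => ∑ μ ∈ (f n).support, |(f n μ : ℝ)|) (half_pos hε)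
  refine ⟨_, no_relation, δ, fun n _ => δ_pos n, fun U hU ϱ hϱ hϱE n hn => ?_⟩
  choose! a ha using hU
  obtain ⟨t, ball_subset⟩ := hϱ.exists_ball_subset
  obtain ⟨X, hX⟩ := kronecker (Idx κ) _ hn
    (Sum.elim (fun f => ((a f + ε / 2 : ℝ) : Circle1)) fun α => t α)
  have near_U (f) (hf : f ∈ F) : dist (torusChar _ (f n) X) ((a f + ε / 2 : ℝ) : Circle1) < ε / 4 :=
    (dist_eq_norm _ _).trans_lt (hX (.inl ⟨f, hf⟩))
  have near_t (α) (hα : α ∈ E) : dist (X α) (t α) < ε / 4 := by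
    simpa [chi, torusChar_apply, dist_eq_norm] using hX (.inr ⟨α, hα⟩)
  refine ⟨ballArcFn ((⋃ f ∈ F, ↑(f n).support) ∪ ↑E) X (δ n), isEpsArcFn_ballArcFn ?_,
    arcFnLE_ballArcFn fun α hα => ⟨.inr (hϱE hα), ?_⟩, arcSupp_ballArcFn (δ_le_one n),
    fun f hf => ?_⟩
  · exact (F.finite_toSet.biUnion fun f _ => (f n).support.finite_toSet).union E.finite_toSet
  · exact (Metric.closedBall_subset_ball' (by linarith [near_t α (hϱE hα), δ_lt n])).trans
      (ball_subset α)
  · rw [ha f hf, arcOf_eq_ball]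
    refine (sum_zsmul_ballArcFn_subset ?_).trans
      (Metric.closedBall_subset_ball' (by linarith [near_U f hf, mul_δ_lt n f hf]))
    exact (Set.subset_biUnion_of_mem (u := fun f => ((f n).support : Set (Idx κ))) hf).trans
      Set.subset_union_left

theorem statement16 (κ : Cardinal) (hκ : ℵ₀ ≤ κ) (hpow : κ ^ ℵ₀ = κ)
    (p : Ultrafilter ℕ) (hp : IsSelective p)
    (F : Finset (ℕ → GZ κ))
    (hli : LinearIndependent ℚ
      (Sum.elim (fun f : ↥F => cls κ p ↑f) (fun α : Idx κ => clsChi κ p α)))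
    (ε : ℝ) (hε : 0 < ε) (E : Finset (Idx κ)) :
    ∃ A ∈ p, ∃ δ : ℕ → ℝ, (∀ n ∈ A, 0 < δ n) ∧
      ∀ U : (ℕ → GZ κ) → Set Circle1, (∀ f ∈ F, ∃ a : ℝ, U f = arcOf a ε) →
      ∀ ϱ : Idx κ → Set Circle1, IsArcFnGe κ ε ϱ → arcSupp κ ϱ ⊆ ↑E →
      ∀ n ∈ A, ∃ ψ : Idx κ → Set Circle1,
        IsEpsArcFn κ (δ n) ψ ∧ ArcFnLE κ ψ ϱ ∧
        arcSupp κ ψ = (⋃ f ∈ F, ↑(f n).support) ∪ ↑E ∧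
        ∀ f ∈ F, (∑ μ ∈ (f n).support, (f n) μ • ψ μ) ⊆ U f :=
  statement16_general κ p F hli ε hε E

end
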